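/- Let d ≥ 1, let ν, ν′ be Borel probability measures on ℝ^d with finite first moments, and let ρ be a Borel probability measure on ℝ^d whose support is contained in the closed unit ball. Then |C(ν,ρ) − C(ν′,ρ)| ≤ W₁(ν,ν′), where W₁(ν,ν′) := inf over π ∈ Π(ν,ν′) of ∫ |x−z| dπ(x,z) is the 1-Wasserstein distance. -/

import Mathlib

open MeasureTheory Metric RealInnerProductSpace

noncomputable section

/-- The set of couplings of two measures on `ℝ^d`. -/
def Couplings {d : ℕ} (α β : Measure (EuclideanSpace ℝ (Fin d))) :
    Set (Measure (EuclideanSpace ℝ (Fin d) × EuclideanSpace ℝ (Fin d))) :=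
  {π | π.map Prod.fst = α ∧ π.map Prod.snd = β}

/-- `C(α,β) = sup_{π ∈ Π(α,β)} ∫ ⟨x,y⟩ dπ`. -/
def OTcost {d : ℕ} (α β : Measure (EuclideanSpace ℝ (Fin d))) : ℝ :=
  sSup {r : ℝ | ∃ π ∈ Couplings α β, r = ∫ p, ⟪p.1, p.2⟫ ∂π}

/-- The 1-Wasserstein distance `W₁(α,β) = inf_{π ∈ Π(α,β)} ∫ |x-z| dπ`. -/
def W1 {d : ℕ} (α β : Measure (EuclideanSpace ℝ (Fin d))) : ℝ :=
  sInf {r : ℝ | ∃ π ∈ Couplings α β, r = ∫ p, ‖p.1 - p.2‖ ∂π}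

/-!
Glue a coupling `π` of `(α, ρ)` and a coupling `P` of `(α, β)` along `α` into the law `γ` of a
triple `((X, Y), X')`. The law of `(X', Y)` is a coupling of `(β, ρ)`, and when `c · y` is
`L`-Lipschitz for `ρ`-almost every `y`, taking expectations in `c X Y ≤ c X' Y + L * dist X X'`
compares the cost of `π` with that of this coupling, up to `L` times the transport cost of `P`.
For the inner product and `ρ` carried by the unit ball, `L = 1`.
-/

open ProbabilityTheory
open scoped NNReal Pointwise

/-- `π` is a coupling of `α` and `β`: its marginals are `α` and `β`. Unlike in `Couplings`, the two
measures may live on different measurable spaces. -/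
structure IsCoupling {X Y : Type*} [MeasurableSpace X] [MeasurableSpace Y]
    (π : Measure (X × Y)) (α : Measure X) (β : Measure Y) : Prop where
  measurePreserving_fst : MeasurePreserving Prod.fst π α
  measurePreserving_snd : MeasurePreserving Prod.snd π β

/-- The maximal transport cost `sup_π ∫ c(x, y) dπ` over the couplings `π` of `α` and `β`. As a
supremum in `ℝ`, it is `0` when there is no coupling or the costs are unbounded above. -/
def maxTransportCost {X Y : Type*} [MeasurableSpace X] [MeasurableSpace Y]
    (c : X → Y → ℝ) (α : Measure X) (β : Measure Y) : ℝ :=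
  sSup {r | ∃ π, IsCoupling π α β ∧ r = ∫ p, c p.1 p.2 ∂π}

/-- The `1`-Wasserstein distance `inf_π ∫ dist x z dπ` over the couplings `π` of `α` and `β`, as a
real number: it is `0` when there is no coupling, and non-integrable distances integrate to `0`. -/
def wassersteinDist {X : Type*} [MeasurableSpace X] [PseudoMetricSpace X] (α β : Measure X) : ℝ :=
  sInf {r | ∃ π, IsCoupling π α β ∧ r = ∫ p, dist p.1 p.2 ∂π}

theorem exists_gluing {X Y Z : Type*} [MeasurableSpace X] [MeasurableSpace Y] [MeasurableSpace Z]
    [StandardBorelSpace Z] [Nonempty Z] {π : Measure (X × Y)} {P : Measure (X × Z)} [SFinite π]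
    [IsFiniteMeasure P] (h : π.fst = P.fst) :
    ∃ γ : Measure ((X × Y) × Z), MeasurePreserving Prod.fst γ π ∧
      MeasurePreserving (fun q ↦ (q.1.1, q.2)) γ P := by
  -- Given `(x, y)`, draw `z` from the conditional law under `P` given `x`, independently of `y`.
  let κ : Kernel (X × Y) Z := P.condKernel.comap Prod.fst measurable_fst
  refine ⟨π ⊗ₘ κ, ⟨measurable_fst, Measure.fst_compProd π κ⟩, by fun_prop, ?_⟩
  ext s hs
  calc (π ⊗ₘ κ).map (fun q ↦ (q.1.1, q.2)) s
      = ∫⁻ p, P.condKernel p.1 (Prod.mk p.1 ⁻¹' s) ∂π := by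
        rw [Measure.map_apply (by fun_prop) hs, Measure.compProd_apply (by measurability)]
        rfl
    _ = ∫⁻ x, P.condKernel x (Prod.mk x ⁻¹' s) ∂π.fst :=
        (lintegral_map (Kernel.measurable_kernel_prodMk_left hs) measurable_fst).symm
    _ = P s := by
        rw [h, ← Measure.compProd_apply hs, P.disintegrate]

namespace IsCoupling

variable {X Y : Type*} [MeasurableSpace X] [MeasurableSpace Y]
  {π : Measure (X × Y)} {α : Measure X} {β : Measure Y}

theorem prod (α : Measure X) (β : Measure Y) [IsProbabilityMeasure α] [IsProbabilityMeasure β] :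
    IsCoupling (α.prod β) α β :=
  ⟨MeasureTheory.measurePreserving_fst, MeasureTheory.measurePreserving_snd⟩

theorem swap (h : IsCoupling π α β) : IsCoupling (π.map Prod.swap) β α where
  measurePreserving_fst := .map_of_comp h.measurePreserving_snd measurable_fst measurable_swap
  measurePreserving_snd := .map_of_comp h.measurePreserving_fst measurable_snd measurable_swap

theorem isProbabilityMeasure [IsProbabilityMeasure α] (h : IsCoupling π α β) :
    IsProbabilityMeasure π :=
  h.measurePreserving_fst.hasLaw.isProbabilityMeasure

end IsCoupling

theorem integral_dist_map_swap {X : Type*} [MeasurableSpace X] [PseudoMetricSpace X]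
    (P : Measure (X × X)) :
    ∫ p, dist p.1 p.2 ∂(P.map Prod.swap) = ∫ p, dist p.1 p.2 ∂P :=
  (integral_map_equiv MeasurableEquiv.prodComm _).trans
    (integral_congr_ae (ae_of_all P fun p ↦ dist_comm p.2 p.1))

theorem integral_cost_le_add_integral_dist {Ω X Y : Type*} [MeasurableSpace Ω] [PseudoMetricSpace X]
    {γ : Measure Ω} {c : X → Y → ℝ} {L : ℝ≥0} {u v : Ω → X} {w : Ω → Y}
    (hL : ∀ᵐ ω ∂γ, LipschitzWith L (c · (w ω)))
    (hu : Integrable (fun ω ↦ c (u ω) (w ω)) γ) (hv : Integrable (fun ω ↦ c (v ω) (w ω)) γ)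
    (huv : Integrable (fun ω ↦ dist (u ω) (v ω)) γ) :
    ∫ ω, c (u ω) (w ω) ∂γ ≤ ∫ ω, c (v ω) (w ω) ∂γ + L * ∫ ω, dist (u ω) (v ω) ∂γ := by
  rw [← integral_const_mul, ← integral_add hv (huv.const_mul _)]
  refine integral_mono_ae hu (hv.add (huv.const_mul _)) ?_
  filter_upwards [hL] with ω hω
  exact hω.le_add_mul (u ω) (v ω)

section Lipschitz

variable {X Y : Type*} [MeasurableSpace X] [PseudoMetricSpace X] [MeasurableSpace Y]
  {α β : Measure X} {ρ : Measure Y} {c : X → Y → ℝ} {L : ℝ≥0} {x₀ : X}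

theorem IsCoupling.norm_cost_le {π : Measure (X × Y)} (hπ : IsCoupling π α ρ)
    (hL : ∀ᵐ y ∂ρ, LipschitzWith L (c · y)) :
    ∀ᵐ p ∂π, ‖c p.1 p.2‖ ≤ ‖c x₀ p.2‖ + L * dist x₀ p.1 := by
  filter_upwards [hπ.measurePreserving_snd.quasiMeasurePreserving.ae hL] with p hp
  calc ‖c p.1 p.2‖ ≤ ‖c x₀ p.2‖ + dist (c x₀ p.2) (c p.1 p.2) := by
        rw [dist_eq_norm]; exact norm_le_norm_add_norm_sub _ _
    _ ≤ ‖c x₀ p.2‖ + L * dist x₀ p.1 := by gcongr; exact hp.dist_le_mul x₀ p.1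

theorem IsCoupling.integrable_cost_bound {π : Measure (X × Y)} (hπ : IsCoupling π α ρ)
    (hα : Integrable (dist x₀) α) (hρ : Integrable (c x₀) ρ) :
    Integrable (fun p ↦ ‖c x₀ p.2‖ + L * dist x₀ p.1) π :=
  (hπ.measurePreserving_snd.integrable_comp_of_integrable hρ.norm).add
    ((hπ.measurePreserving_fst.integrable_comp_of_integrable hα).const_mul _)

theorem IsCoupling.integrable_cost {π : Measure (X × Y)} (hπ : IsCoupling π α ρ)
    (hc : Measurable c.uncurry) (hL : ∀ᵐ y ∂ρ, LipschitzWith L (c · y))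
    (hα : Integrable (dist x₀) α) (hρ : Integrable (c x₀) ρ) :
    Integrable (fun p ↦ c p.1 p.2) π :=
  (hπ.integrable_cost_bound hα hρ).mono' hc.aestronglyMeasurable (hπ.norm_cost_le hL)

theorem IsCoupling.integral_cost_le {π : Measure (X × Y)} (hπ : IsCoupling π α ρ)
    (hL : ∀ᵐ y ∂ρ, LipschitzWith L (c · y))
    (hα : Integrable (dist x₀) α) (hρ : Integrable (c x₀) ρ) :
    ∫ p, c p.1 p.2 ∂π ≤ ∫ y, ‖c x₀ y‖ ∂ρ + L * ∫ x, dist x₀ x ∂α := by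
  have hfst := hπ.measurePreserving_fst
  have hsnd := hπ.measurePreserving_snd
  calc ∫ p, c p.1 p.2 ∂π ≤ ‖∫ p, c p.1 p.2 ∂π‖ := Real.le_norm_self _
    _ ≤ ∫ p, (‖c x₀ p.2‖ + L * dist x₀ p.1) ∂π :=
        norm_integral_le_of_norm_le (hπ.integrable_cost_bound hα hρ) (hπ.norm_cost_le hL)
    _ = ∫ p, ‖c x₀ p.2‖ ∂π + L * ∫ p, dist x₀ p.1 ∂π := by
        rw [← integral_const_mul]
        exact integral_add (hsnd.integrable_comp_of_integrable hρ.norm)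
          ((hfst.integrable_comp_of_integrable hα).const_mul _)
    _ = ∫ y, ‖c x₀ y‖ ∂ρ + L * ∫ x, dist x₀ x ∂α := by
        rw [← hsnd.hasLaw.integral_comp hρ.norm.1, ← hfst.hasLaw.integral_comp hα.1]
        rfl

theorem IsCoupling.integral_cost_le_maxTransportCost {π : Measure (X × Y)}
    (hπ : IsCoupling π α ρ) (hL : ∀ᵐ y ∂ρ, LipschitzWith L (c · y))
    (hα : Integrable (dist x₀) α) (hρ : Integrable (c x₀) ρ) :
    ∫ p, c p.1 p.2 ∂π ≤ maxTransportCost c α ρ := by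
  refine le_csSup ⟨∫ y, ‖c x₀ y‖ ∂ρ + L * ∫ x, dist x₀ x ∂α, ?_⟩ ⟨π, hπ, rfl⟩
  rintro _ ⟨π', hπ', rfl⟩
  exact hπ'.integral_cost_le hL hα hρ

variable [OpensMeasurableSpace X] [SecondCountableTopology X]

theorem IsCoupling.integrable_dist {P : Measure (X × X)} (hP : IsCoupling P α β)
    (hα : Integrable (dist x₀) α) (hβ : Integrable (dist x₀) β) :
    Integrable (fun p ↦ dist p.1 p.2) P :=
  hP.integrable_cost measurable_dist (ae_of_all β LipschitzWith.dist_left) hα hβ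

variable [StandardBorelSpace X] [IsProbabilityMeasure α]

theorem IsCoupling.exists_integral_cost_le {π : Measure (X × Y)} {P : Measure (X × X)}
    (hπ : IsCoupling π α ρ) (hP : IsCoupling P α β)
    (hc : Measurable c.uncurry) (hL : ∀ᵐ y ∂ρ, LipschitzWith L (c · y))
    (hα : Integrable (dist x₀) α) (hβ : Integrable (dist x₀) β) (hρ : Integrable (c x₀) ρ) :
    ∃ π', IsCoupling π' β ρ ∧
      ∫ p, c p.1 p.2 ∂π ≤ ∫ p, c p.1 p.2 ∂π' + L * ∫ p, dist p.1 p.2 ∂P := by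
  have := hπ.isProbabilityMeasure
  have := hP.isProbabilityMeasure
  have : Nonempty X := ⟨x₀⟩
  obtain ⟨γ, hγπ, hγP⟩ := exists_gluing
    (hπ.measurePreserving_fst.map_eq.trans hP.measurePreserving_fst.map_eq.symm)
  have hγρ : MeasurePreserving (fun q ↦ q.1.2) γ ρ := hπ.measurePreserving_snd.comp hγπ
  let f : (X × Y) × X → X × Y := fun q ↦ (q.2, q.1.2)
  have hf : Measurable f := by fun_prop
  have hγπ' : MeasurePreserving f γ (γ.map f) := hf.measurePreserving γ
  have hπ' : IsCoupling (γ.map f) β ρ :=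
    ⟨.map_of_comp (hP.measurePreserving_snd.comp hγP) measurable_fst hf,
      .map_of_comp hγρ measurable_snd hf⟩
  refine ⟨γ.map f, hπ', ?_⟩
  have hint := hπ.integrable_cost hc hL hα hρ
  have hint' := hπ'.integrable_cost hc hL hβ hρ
  have hdist := hP.integrable_dist hα hβ
  calc ∫ p, c p.1 p.2 ∂π = ∫ q, c q.1.1 q.1.2 ∂γ := (hγπ.hasLaw.integral_comp hint.1).symm
    _ ≤ ∫ q, c q.2 q.1.2 ∂γ + L * ∫ q, dist q.1.1 q.2 ∂γ :=
        integral_cost_le_add_integral_dist (hγρ.quasiMeasurePreserving.ae hL)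
          (hγπ.integrable_comp_of_integrable hint) (hγπ'.integrable_comp_of_integrable hint')
          (hγP.integrable_comp_of_integrable hdist)
    _ = ∫ p, c p.1 p.2 ∂(γ.map f) + L * ∫ p, dist p.1 p.2 ∂P := by
        rw [← hγπ'.hasLaw.integral_comp hint'.1, ← hγP.hasLaw.integral_comp hdist.1]
        rfl

theorem maxTransportCost_le_add [IsProbabilityMeasure ρ] {P : Measure (X × X)}
    (hP : IsCoupling P α β) (hc : Measurable c.uncurry)
    (hL : ∀ᵐ y ∂ρ, LipschitzWith L (c · y))
    (hα : Integrable (dist x₀) α) (hβ : Integrable (dist x₀) β) (hρ : Integrable (c x₀) ρ) :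
    maxTransportCost c α ρ ≤ maxTransportCost c β ρ + L * ∫ p, dist p.1 p.2 ∂P := by
  refine csSup_le ⟨_, _, .prod α ρ, rfl⟩ ?_
  rintro r ⟨π, hπ, rfl⟩
  obtain ⟨π', hπ', hle⟩ := hπ.exists_integral_cost_le hP hc hL hα hβ hρ
  exact hle.trans (by gcongr; exact hπ'.integral_cost_le_maxTransportCost hL hβ hρ)

end Lipschitz

section Inner

variable {E : Type*} [SeminormedAddCommGroup E] [InnerProductSpace ℝ E]

theorem lipschitzWith_inner_left (y : E) :
    LipschitzWith ‖y‖₊ (inner ℝ · y) :=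
  .of_dist_le_mul fun x z ↦ by
    rw [dist_eq_norm, dist_eq_norm, ← inner_sub_left, mul_comm]
    exact norm_inner_le_norm _ _

theorem ae_lipschitzWith_inner_left [MeasurableSpace E] {ρ : Measure E} {R : ℝ≥0}
    (hρ : ρ (closedBall 0 R)ᶜ = 0) :
    ∀ᵐ y ∂ρ, LipschitzWith R (inner ℝ · y) := by
  filter_upwards [compl_mem_ae_iff.2 hρ] with y hy
  rw [compl_compl, mem_closedBall_zero_iff] at hy
  exact (lipschitzWith_inner_left y).weaken hy

end Inner

section Euclidean

variable {d : ℕ}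

theorem mem_couplings_iff {α β : Measure (EuclideanSpace ℝ (Fin d))}
    {π : Measure (EuclideanSpace ℝ (Fin d) × EuclideanSpace ℝ (Fin d))} :
    π ∈ Couplings α β ↔ IsCoupling π α β :=
  ⟨fun h ↦ ⟨⟨measurable_fst, h.1⟩, ⟨measurable_snd, h.2⟩⟩,
    fun h ↦ ⟨h.measurePreserving_fst.map_eq, h.measurePreserving_snd.map_eq⟩⟩

theorem OTcost_eq_maxTransportCost (α β : Measure (EuclideanSpace ℝ (Fin d))) :
    OTcost α β = maxTransportCost (inner ℝ) α β := by
  simp only [OTcost, maxTransportCost, mem_couplings_iff]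

theorem W1_eq_wassersteinDist (α β : Measure (EuclideanSpace ℝ (Fin d))) :
    W1 α β = wassersteinDist α β := by
  simp only [W1, wassersteinDist, mem_couplings_iff, dist_eq_norm]

end Euclidean

theorem stmt12_general {X Y : Type*} [MeasurableSpace X] [PseudoMetricSpace X]
    [OpensMeasurableSpace X] [SecondCountableTopology X] [StandardBorelSpace X] [MeasurableSpace Y]
    {α β : Measure X} {ρ : Measure Y} [IsProbabilityMeasure α] [IsProbabilityMeasure β]
    [IsProbabilityMeasure ρ] {c : X → Y → ℝ} {L : ℝ≥0} {x₀ : X}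
    (hc : Measurable c.uncurry) (hL : ∀ᵐ y ∂ρ, LipschitzWith L (c · y))
    (hα : Integrable (fun x ↦ dist x₀ x) α) (hβ : Integrable (fun x ↦ dist x₀ x) β)
    (hρ : Integrable (fun y ↦ c x₀ y) ρ) :
    |maxTransportCost c α ρ - maxTransportCost c β ρ| ≤ L * wassersteinDist α β := by
  rw [wassersteinDist, ← smul_eq_mul, ← Real.sInf_smul_of_nonneg L.coe_nonneg]
  refine le_csInf (.smul_set ⟨_, _, .prod α β, rfl⟩) ?_
  rintro _ ⟨_, ⟨P, hP, rfl⟩, rfl⟩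
  have hαβ := maxTransportCost_le_add hP hc hL hα hβ hρ
  have hβα := maxTransportCost_le_add hP.swap hc hL hβ hα hρ
  rw [integral_dist_map_swap] at hβα
  rw [abs_sub_le_iff, sub_le_iff_le_add', sub_le_iff_le_add']
  exact ⟨hαβ, hβα⟩

theorem stmt12 (d : ℕ) (hd : 1 ≤ d)
    (ν ν' ρ : Measure (EuclideanSpace ℝ (Fin d)))
    [IsProbabilityMeasure ν] [IsProbabilityMeasure ν'] [IsProbabilityMeasure ρ]
    (hν : Integrable (fun x => ‖x‖) ν) (hν' : Integrable (fun x => ‖x‖) ν')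
    (hρ : ρ (closedBall (0 : EuclideanSpace ℝ (Fin d)) 1)ᶜ = 0) :
    |OTcost ν ρ - OTcost ν' ρ| ≤ W1 ν ν' := by
  simpa [OTcost_eq_maxTransportCost, W1_eq_wassersteinDist] using
    stmt12_general (x₀ := 0) (L := 1) continuous_inner.measurable (ae_lipschitzWith_inner_left hρ)
      (by simpa using hν) (by simpa using hν') (by simp)
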